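/- Let q ≥ 2, n ≥ 1 and d ≤ n be integers, and let C ⊆ (Fin q)^n be a code of cardinality M with minimum Hamming distance at least d. For u, v ∈ (Fin q)^n write g(u,v) := n − d_H(u,v); for a symbol α and coordinate j let c_{α,j} be the number of words of C whose j-th coordinate equals α; and set m := ⌈M/q⌉ and r := qm − M. Then C(M,2)·(n−d) ≥ Σ_{{u,v}⊆C, u≠v} g(u,v) = Σ_{j=1}^{n} Σ_{α∈Fin q} C(c_{α,j},2) ≥ n·((q−r)·C(m,2) + r·C(m−1,2)). Moreover, the number of unordered pairs {u,v} ⊆ C with u ≠ v and d_H(u,v) ≠ d is at most C(M,2)·(n−d) − n·((q−r)·C(m,2) + r·C(m−1,2)). -/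

import Mathlib

open Finset

/-- `g(u,v) = n - d_H(u,v)`, lifted to unordered pairs of words. -/
def gSym2 (q n : ℕ) : Sym2 (Fin n → Fin q) → ℕ :=
  Sym2.lift ⟨fun u v => n - hammingDist u v, fun u v => by simp only [hammingDist_comm u v]⟩

/-- The Hamming distance, lifted to unordered pairs of words. -/
def distSym2 (q n : ℕ) : Sym2 (Fin n → Fin q) → ℕ :=
  Sym2.lift ⟨fun u v => hammingDist u v, fun u v => hammingDist_comm u v⟩

/-!
Double counting of agreements: swapping the order of summation, the agreements between pairs of
distinct codewords number `Σ_j Σ_α C(c_{α,j}, 2)`. For each coordinate `j` the `c_{α,j}` sum to `M`,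
so by convexity the inner sum is smallest when they are as equal as possible; convexity enters as
the tangent inequality `C(c, 2) ≥ C(k, 2) + k (c - k)` at `k = m - 1`, an equality for
`c ∈ {m - 1, m}`. In the other direction, a pair at distance at least `d` has at most `n - d`
agreements, and at least one fewer if its distance is not `d`.
-/

/-- The least possible number of unordered pairs of items sharing a class when `M` items are
distributed over `q` classes. It is attained when `q - r` classes hold `m = ⌈M / q⌉` items and the
remaining `r = q m - M` hold `m - 1`; for `q > 0` neither `q m - M` nor `q - r` truncates. -/
def balancedPairs (q M : ℕ) : ℕ :=
  (q - (q * (M ⌈/⌉ q) - M)) * (M ⌈/⌉ q).choose 2 +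
    (q * (M ⌈/⌉ q) - M) * (M ⌈/⌉ q - 1).choose 2

lemma choose_two_add_mul_le (k c : ℕ) : k.choose 2 + k * c ≤ c.choose 2 + k * k := by
  have hsq : (c : ℚ) - k ≤ (c - k) ^ 2 := mod_cast Int.le_self_sq ((c : ℤ) - k)
  qify
  simp only [Nat.cast_choose_two]
  linarith

-- Equality in the tangent inequality summed over a balanced distribution, with the terms arranged
-- so that no subtraction occurs.
lemma balancedPairs_add_mul (q M : ℕ) :
    balancedPairs q M + q * ((M ⌈/⌉ q - 1) * (M ⌈/⌉ q - 1)) =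
      q * (M ⌈/⌉ q - 1).choose 2 + (M ⌈/⌉ q - 1) * M := by
  unfold balancedPairs
  rcases q.eq_zero_or_pos with rfl | hq
  · simp
  have hle : M ≤ q * (M ⌈/⌉ q) := le_smul_ceilDiv hq
  have hge : ∀ k < M ⌈/⌉ q, q * k ≤ M := fun k hk =>
    (not_le.1 fun h => hk.not_ge ((ceilDiv_le_iff_le_mul hq).2 h)).le
  generalize M ⌈/⌉ q = m at hle hge ⊢
  cases m with
  | zero => simp
  | succ k =>
    obtain ⟨s, rfl⟩ := Nat.exists_eq_add_of_le (hge k k.lt_succ_self)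
    obtain ⟨r, rfl⟩ : ∃ r, q = s + r := Nat.exists_eq_add_of_le (by lia)
    have hr : (s + r) * (k + 1) - ((s + r) * k + s) = r := by lia
    rw [hr, Nat.add_sub_cancel, Nat.add_sub_cancel, Nat.choose_succ_succ', Nat.choose_one_right]
    ring

lemma balancedPairs_le_sum_choose_two {α : Type*} (s : Finset α) (c : α → ℕ) :
    balancedPairs #s (∑ a ∈ s, c a) ≤ ∑ a ∈ s, (c a).choose 2 := by
  set M := ∑ a ∈ s, c a with hM
  set k := M ⌈/⌉ #s - 1
  have htangent : ∑ a ∈ s, (k.choose 2 + k * c a) ≤ ∑ a ∈ s, ((c a).choose 2 + k * k) :=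
    sum_le_sum fun a _ => choose_two_add_mul_le k (c a)
  simp only [sum_add_distrib, ← mul_sum, sum_const, smul_eq_mul, ← hM] at htangent
  have hbalanced : balancedPairs #s M + #s * (k * k) = #s * k.choose 2 + k * M :=
    balancedPairs_add_mul #s M
  lia

lemma card_filter_sym2_not_isDiag {α : Type*} [DecidableEq α] (s : Finset α) :
    #{z ∈ s.sym2 | ¬z.IsDiag} = (#s).choose 2 := by
  rw [sym2_eq_image, Sym2.filter_image_mk_not_isDiag, Sym2.card_image_offDiag]

lemma card_filter_sym2_isDiag_map {α β : Type*} [DecidableEq α] [Fintype β] [DecidableEq β]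
    (s : Finset α) (f : α → β) :
    #{z ∈ s.sym2 | ¬z.IsDiag ∧ (z.map f).IsDiag} = ∑ b, (#{a ∈ s | f a = b}).choose 2 := by
  simp_rw [← card_filter_sym2_not_isDiag]
  rw [← card_biUnion]
  · congr 1
    ext z
    induction z with
    | _ u v =>
      simp only [mem_biUnion, mem_filter, mk_mem_sym2_iff, Sym2.mk_isDiag_iff, Sym2.map_mk,
        mem_univ, true_and]
      grind
  · refine fun b _ b' _ hb => disjoint_left.2 fun z hz hz' => hb ?_
    induction z with
    | _ u v =>
      simp only [mem_filter, mk_mem_sym2_iff] at hz hz'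
      exact hz.1.1.2.symm.trans hz'.1.1.2

section Code

variable {ι : Type*} [Fintype ι] {α : ι → Type*} [∀ i, DecidableEq (α i)]

/-- The number of coordinates in which the two words of an unordered pair agree. The words may have
a different alphabet `α i` in each coordinate. -/
def agreement (z : Sym2 (∀ i, α i)) : ℕ :=
  #{i | (z.map fun w => w i).IsDiag}

/-- The Hamming distance between the two words of an unordered pair, for words over
coordinate-dependent alphabets. -/
def pairDist : Sym2 (∀ i, α i) → ℕ :=
  Sym2.lift ⟨hammingDist, hammingDist_comm⟩

lemma agreement_add_pairDist (z : Sym2 (∀ i, α i)) :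
    agreement z + pairDist z = Fintype.card ι := by
  induction z with
  | _ u v => simpa [agreement, pairDist, hammingDist] using
      card_filter_add_card_filter_not (s := univ) fun i => u i = v i

lemma sum_agreement [∀ i, Fintype (α i)] (C : Finset (∀ i, α i)) :
    ∑ z ∈ C.sym2 with ¬z.IsDiag, agreement z = ∑ i, ∑ a, (#{w ∈ C | w i = a}).choose 2 :=
  calc ∑ z ∈ C.sym2 with ¬z.IsDiag, agreement z
    _ = ∑ i, #{z ∈ {z ∈ C.sym2 | ¬z.IsDiag} | (z.map fun w => w i).IsDiag} :=
      sum_card_bipartiteAbove_eq_sum_card_bipartiteBelow _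
    _ = ∑ i, ∑ a, (#{w ∈ C | w i = a}).choose 2 := by
      simp only [filter_filter, card_filter_sym2_isDiag_map]

lemma sum_balancedPairs_le_sum_agreement [∀ i, Fintype (α i)] (C : Finset (∀ i, α i)) :
    ∑ i, balancedPairs (Fintype.card (α i)) #C ≤ ∑ z ∈ C.sym2 with ¬z.IsDiag, agreement z := by
  rw [sum_agreement]
  refine sum_le_sum fun i _ => ?_
  have hfibers : #C = ∑ a, #{w ∈ C | w i = a} :=
    card_eq_sum_card_fiberwise fun w _ => mem_coe.2 (mem_univ (w i))
  rw [hfibers]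
  exact balancedPairs_le_sum_choose_two univ _

lemma card_pairDist_ne_add_sum_agreement_le {C : Finset (∀ i, α i)} {d : ℕ}
    (hC : (C : Set (∀ i, α i)).Pairwise fun u v => d ≤ hammingDist u v) :
    #{z ∈ C.sym2 | ¬z.IsDiag ∧ pairDist z ≠ d} + ∑ z ∈ C.sym2 with ¬z.IsDiag, agreement z ≤
      (#C).choose 2 * (Fintype.card ι - d) := by
  have hdist : ∀ z ∈ C.sym2, ¬z.IsDiag → d ≤ pairDist z := by
    intro z
    induction z with
    | _ u v =>
      rw [mk_mem_sym2_iff]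
      exact fun h huv => hC h.1 h.2 huv
  rw [← filter_filter, card_filter, ← sum_add_distrib, ← card_filter_sym2_not_isDiag, ← smul_eq_mul]
  refine sum_le_card_nsmul _ _ _ fun z hz => ?_
  obtain ⟨hzC, hz⟩ := mem_filter.1 hz
  have hd := hdist z hzC hz
  have hadd := agreement_add_pairDist z
  split_ifs <;> lia

theorem counting_proposition_general [∀ i, Fintype (α i)] (C : Finset (∀ i, α i)) (d : ℕ)
    (hC : (C : Set (∀ i, α i)).Pairwise fun u v => d ≤ hammingDist u v) :
    ∑ z ∈ C.sym2 with ¬z.IsDiag, agreement z ≤ (#C).choose 2 * (Fintype.card ι - d) ∧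
    ∑ z ∈ C.sym2 with ¬z.IsDiag, agreement z = ∑ i, ∑ a, (#{w ∈ C | w i = a}).choose 2 ∧
    ∑ i, balancedPairs (Fintype.card (α i)) #C ≤ ∑ z ∈ C.sym2 with ¬z.IsDiag, agreement z ∧
    #{z ∈ C.sym2 | ¬z.IsDiag ∧ pairDist z ≠ d} ≤
      (#C).choose 2 * (Fintype.card ι - d) - ∑ i, balancedPairs (Fintype.card (α i)) #C := by
  have hupper := card_pairDist_ne_add_sum_agreement_le hC
  have hlower := sum_balancedPairs_le_sum_agreement C
  exact ⟨by lia, sum_agreement C, hlower, by lia⟩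

end Code

lemma gSym2_eq_agreement (q n : ℕ) : gSym2 q n = agreement := by
  ext z
  have hsum := agreement_add_pairDist z
  rw [Fintype.card_fin] at hsum
  induction z with
  | _ u v => exact Nat.sub_eq_of_eq_add hsum.symm

/-- The counting proposition (Proposition 4.1 in the thesis): for a code `C ⊆ (Fin q)^n`
of cardinality `M` with minimum Hamming distance at least `d`, writing
`g(u,v) := n - d_H(u,v)`, `c_{α,j}` for the number of words of `C` with `α` in
coordinate `j`, `m := ⌈M/q⌉` and `r := qm - M`, we have
`C(M,2)(n-d) ≥ Σ_{{u,v}⊆C, u≠v} g(u,v) = Σ_j Σ_α C(c_{α,j},2) ≥ n((q-r)C(m,2) + rC(m-1,2))`,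
and the number of unordered pairs `{u,v} ⊆ C`, `u ≠ v`, with `d_H(u,v) ≠ d` is at most
the leftmost term minus the rightmost term. -/
theorem counting_proposition (q n d : ℕ) (hq : 2 ≤ q) (hn : 0 < n) (hd : 0 < d) (hdn : d ≤ n)
    (C : Finset (Fin n → Fin q)) (M : ℕ) (hM : C.card = M)
    (hC : ∀ u ∈ C, ∀ v ∈ C, u ≠ v → d ≤ hammingDist u v)
    (m r : ℕ) (hm : m = (M + q - 1) / q) (hr : r = q * m - M) :
    (Nat.choose M 2 * (n - d) ≥
        ∑ z ∈ C.sym2.filter (fun z => ¬ z.IsDiag), gSym2 q n z)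
    ∧ (∑ z ∈ C.sym2.filter (fun z => ¬ z.IsDiag), gSym2 q n z
        = ∑ j : Fin n, ∑ α : Fin q, Nat.choose (C.filter (fun w => w j = α)).card 2)
    ∧ (∑ z ∈ C.sym2.filter (fun z => ¬ z.IsDiag), gSym2 q n z
        ≥ n * ((q - r) * Nat.choose m 2 + r * Nat.choose (m - 1) 2))
    ∧ ((C.sym2.filter (fun z => ¬ z.IsDiag ∧ distSym2 q n z ≠ d)).card
        ≤ Nat.choose M 2 * (n - d)
          - n * ((q - r) * Nat.choose m 2 + r * Nat.choose (m - 1) 2)) := by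
  subst hM hm hr
  have h := counting_proposition_general C d fun u hu v hv => hC u hu v hv
  simp only [← gSym2_eq_agreement, balancedPairs, Nat.ceilDiv_eq_add_pred_div, Fintype.card_fin,
    sum_const, card_univ, smul_eq_mul] at h
  exact h
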